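/- Let Q be a finite quiver, α ≥ 1, r ∈ ℕ^{Q₀} an indivisible rank vector (the gcd of its entries equals 1), and λ ∈ ℤ^{Q₀} generic with respect to r, i.e. Σ_i λ_i r_i = 0 while Σ_i λ_i r'_i ≠ 0 for every r' ∈ ℕ^{Q₀} with r' ≠ 0, r' ≤ r componentwise and r' ≠ r. Let 𝔽_q be a finite field of characteristic p > Σ_i |λ_i| r_i and R := 𝔽_q[t]/(t^α). Then #{ (x,y) : μ(x,y) = (t^{α−1} λ_i · Id_{r_i})_{i∈Q₀} } = #GL_{α,r} · q^{−α⟨r,r⟩} · A_{(Q,α),r}(q) / (1 − q^{−1}), where λ_i · Id_{r_i} denotes the image of the integer λ_i in R times the r_i × r_i identity matrix and #GL_{α,r} = ∏_i #GL_{r_i}(R). -/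

import Mathlib

/-- A finite quiver (equivalently, a finite multigraph with a chosen orientation of each
edge): finitely many vertices and arrows, with source and target maps. -/
structure FinQuiver where
  V : Type
  E : Type
  [fintypeV : Fintype V]
  [fintypeE : Fintype E]
  [decEqV : DecidableEq V]
  s : E → V
  t : E → V

attribute [instance] FinQuiver.fintypeV FinQuiver.fintypeE FinQuiver.decEqV

namespace FinQuiver

/-- The adjacency (simple) graph of the underlying multigraph: two vertices are adjacent
if some edge joins them.  Connectivity of the multigraph only depends on this graph. -/
def adjGraph (G : FinQuiver) : SimpleGraph G.V :=
  SimpleGraph.fromRel fun a b => ∃ e : G.E, G.s e = a ∧ G.t e = b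

/-- The number of connected components of the underlying multigraph. -/
noncomputable def c (G : FinQuiver) : ℕ :=
  Nat.card G.adjGraph.ConnectedComponent

/-- The Betti number `b(Q) = c(Q) - #Q₀ + #Q₁` of the underlying multigraph. -/
noncomputable def betti (G : FinQuiver) : ℤ :=
  (G.c : ℤ) - Fintype.card G.V + Fintype.card G.E

/-- The underlying multigraph is connected. -/
def Connected (G : FinQuiver) : Prop := G.adjGraph.Connected

/-- Deletion of the edge `e`. -/
noncomputable def deleteEdge (G : FinQuiver) (e : G.E) : FinQuiver :=
  letI : DecidableEq G.E := Classical.decEq _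
  { V := G.V, E := {e' : G.E // e' ≠ e}, s := fun e' => G.s e'.1, t := fun e' => G.t e'.1 }

/-- The underlying multigraph is 2-connected: it is connected and stays connected after
deleting any single edge. -/
def TwoConnected (G : FinQuiver) : Prop :=
  G.Connected ∧ ∀ e : G.E, (G.deleteEdge e).Connected

/-- Restriction `Q|_I` to a subset `I` of the vertices (full sub(multi)graph). -/
noncomputable def restrictV (G : FinQuiver) (I : Set G.V) : FinQuiver :=
  letI : DecidablePred (· ∈ I) := Classical.decPred _
  { V := ↥I
    E := {e : G.E // G.s e ∈ I ∧ G.t e ∈ I}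
    s := fun e => ⟨G.s e.1, e.2.1⟩
    t := fun e => ⟨G.t e.1, e.2.2⟩ }

/-- Restriction `Q|_J` to a subset `J` of the edges (keeping all vertices). -/
noncomputable def restrictE (G : FinQuiver) (J : Set G.E) : FinQuiver :=
  letI : DecidablePred (· ∈ J) := Classical.decPred _
  { V := G.V
    E := ↥J
    s := fun e => G.s e.1
    t := fun e => G.t e.1 }

end FinQuiver

/-- The ring of truncated polynomials `F[t]/(t^α)`. -/
abbrev TruncRing (F : Type) [CommRing F] (α : ℕ) : Type :=
  Polynomial F ⧸ Ideal.span {(Polynomial.X : Polynomial F) ^ α}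

/-- The image of `t` in `F[t]/(t^α)`. -/
noncomputable def tvar (F : Type) [CommRing F] (α : ℕ) : TruncRing F α :=
  Ideal.Quotient.mk _ (Polynomial.X : Polynomial F)
/-- The ring homomorphism `F[t]/(t^α) → K[t]/(t^α)` induced by a ring homomorphism
`φ : F → K`. -/
noncomputable def truncMap {F K : Type} [CommRing F] [CommRing K] (φ : F →+* K)
    (α : ℕ) : TruncRing F α →+* TruncRing K α :=
  Ideal.Quotient.lift _
    ((Ideal.Quotient.mk (Ideal.span {(Polynomial.X : Polynomial K) ^ α})).comp
      (Polynomial.mapRingHom φ))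
    (by
      intro a ha
      rw [Ideal.mem_span_singleton] at ha
      obtain ⟨c, rfl⟩ := ha
      have h1 : (Polynomial.mapRingHom φ) ((Polynomial.X : Polynomial F) ^ α * c)
          = (Polynomial.X : Polynomial K) ^ α * Polynomial.map φ c := by
        simp [Polynomial.coe_mapRingHom]
      rw [RingHom.comp_apply, h1, Ideal.Quotient.eq_zero_iff_mem]
      exact Ideal.mul_mem_right _ _ (Ideal.subset_span rfl))
/-- A locally free representation of rank `r` of the quiver `G` over `R`: a matrix
`x_a` of size `r_{t(a)} × r_{s(a)}` for every arrow `a`. -/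
abbrev QRep (G : FinQuiver) (R : Type) [CommRing R] (r : G.V → ℕ) : Type :=
  ∀ a : G.E, Matrix (Fin (r (G.t a))) (Fin (r (G.s a))) R

/-- The second component of a pair in the doubled quiver: a matrix `y_a` of size
`r_{s(a)} × r_{t(a)}` for every arrow `a`. -/
abbrev QCoRep (G : FinQuiver) (R : Type) [CommRing R] (r : G.V → ℕ) : Type :=
  ∀ a : G.E, Matrix (Fin (r (G.s a))) (Fin (r (G.t a))) R

/-- The moment map of the quiver `G`:
`μ(x,y)_i := Σ_{a : t(a)=i} x_a y_a − Σ_{a : s(a)=i} y_a x_a`. -/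
noncomputable def momentMap (G : FinQuiver) {R : Type} [CommRing R] {r : G.V → ℕ}
    (x : QRep G R r) (y : QCoRep G R r) (i : G.V) : Matrix (Fin (r i)) (Fin (r i)) R :=
  (∑ a : G.E, if h : G.t a = i then
      cast (congrArg (fun v => Matrix (Fin (r v)) (Fin (r v)) R) h) (x a * y a) else 0)
  - ∑ a : G.E, if h : G.s a = i then
      cast (congrArg (fun v => Matrix (Fin (r v)) (Fin (r v)) R) h) (y a * x a) else 0

/-- The Euler form `⟨r,r'⟩ := Σ_{i∈Q₀} r_i r'_i − Σ_{a∈Q₁} r_{s(a)} r'_{t(a)}` of `G`. -/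
def eulerForm (G : FinQuiver) (r r' : G.V → ℕ) : ℤ :=
  ∑ i : G.V, (r i : ℤ) * (r' i : ℤ) - ∑ a : G.E, (r (G.s a) : ℤ) * (r' (G.t a) : ℤ)

/-- The change-of-basis action of `GL_{α,r} = ∏_i GL_{r_i}(R)` on representations:
`(g·x)_a := g_{t(a)} x_a g_{s(a)}⁻¹`. -/
def glAct (G : FinQuiver) {R : Type} [CommRing R] {r : G.V → ℕ}
    (g : ∀ i : G.V, (Matrix (Fin (r i)) (Fin (r i)) R)ˣ) (x : QRep G R r) : QRep G R r :=
  fun a => (g (G.t a) : Matrix (Fin (r (G.t a))) (Fin (r (G.t a))) R) * x a *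
    (((g (G.s a))⁻¹ : (Matrix (Fin (r (G.s a))) (Fin (r (G.s a))) R)ˣ) :
      Matrix (Fin (r (G.s a))) (Fin (r (G.s a))) R)

/-- `A` is block-diagonal for the splittings `m = m' + (m − m')`, `n = n' + (n − n')`:
all entries `A k l` with `(k < m') ↮ (l < n')` vanish. -/
def IsBlockDiag {R : Type} [CommRing R] {m n : ℕ} (m' n' : ℕ)
    (A : Matrix (Fin m) (Fin n) R) : Prop :=
  ∀ (k : Fin m) (l : Fin n), ¬ ((k : ℕ) < m' ↔ (l : ℕ) < n') → A k l = 0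

/-- `r'` is the rank vector of a direct summand of the representation `x`: for some
complementary rank vector `r''` with `r' + r'' = r`, some change of basis `g` makes all
matrices of `x` block-diagonal with diagonal blocks of sizes prescribed by `r'`, `r''`.
(In particular `r' = 0` and `r' = r` always qualify.) -/
def IsSummandRank (G : FinQuiver) {R : Type} [CommRing R] {r : G.V → ℕ}
    (x : QRep G R r) (r' : G.V → ℕ) : Prop :=
  ∃ r'' : G.V → ℕ, (∀ i, r' i + r'' i = r i) ∧
    ∃ g : ∀ i : G.V, (Matrix (Fin (r i)) (Fin (r i)) R)ˣ,
      ∀ a : G.E, IsBlockDiag (r' (G.t a)) (r' (G.s a)) (glAct G g x a)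

/-- `x` is decomposable: it is a direct sum of two representations of nonzero ranks. -/
def Decomposable (G : FinQuiver) {R : Type} [CommRing R] {r : G.V → ℕ}
    (x : QRep G R r) : Prop :=
  ∃ r' r'' : G.V → ℕ, (∀ i, r' i + r'' i = r i) ∧ r' ≠ 0 ∧ r'' ≠ 0 ∧
    ∃ g : ∀ i : G.V, (Matrix (Fin (r i)) (Fin (r i)) R)ˣ,
      ∀ a : G.E, IsBlockDiag (r' (G.t a)) (r' (G.s a)) (glAct G g x a)

/-- `x` is absolutely indecomposable: for every finite field extension `K` of `F`, the
representation obtained by applying `𝔽_q[t]/(t^α) → K[t]/(t^α)` entrywise is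
indecomposable. -/
def AbsIndec (G : FinQuiver) (F : Type) [Field F] (α : ℕ) {r : G.V → ℕ}
    (x : QRep G (TruncRing F α) r) : Prop :=
  ∀ (K : Type) [Field K] [Algebra F K] [FiniteDimensional F K],
    ¬ Decomposable G (fun a => (x a).map (truncMap (algebraMap F K) α))

/-- `A_{(Q,α),r}(q)`: the number of `GL_{α,r}`-orbits of absolutely indecomposable locally
free representations of rank `r` of `Q` over `R = 𝔽_q[t]/(t^α)`. -/
noncomputable def KacCountRank (G : FinQuiver) (F : Type) [Field F] [Fintype F]
    (α : ℕ) (r : G.V → ℕ) : ℕ :=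
  Nat.card (Quot (fun x y : {x : QRep G (TruncRing F α) r // AbsIndec G F α x} =>
    ∃ g : ∀ i : G.V, (Matrix (Fin (r i)) (Fin (r i)) (TruncRing F α))ˣ,
      glAct G g x.1 = y.1))

/-!
The fibre is counted by projecting it to `x`. For a Frobenius form `ε` on `R`, the pairing
`(ξ, η) ↦ ε (∑ᵢ tr (ξᵢ ηᵢ))` makes the range of `y ↦ μ(x, y)` the orthogonal complement of `End x`.
Hence a nonempty fibre over `x` has `q^{-α⟨r,r⟩} · #End x` elements, and the fibre over
`θ = (t^{α-1} λᵢ · Id)ᵢ` is nonempty if and only if `θ ⟂ End x`.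

Up to a nonzero factor, the pairing of `ξ ∈ End x` with `θ` is `∑ᵢ λᵢ tr ξᵢ` modulo `t`. A proper
direct summand of rank `r'` of some scalar extension of `x` gives an idempotent with trace `r'`, and
genericity says that `∑ᵢ λᵢ r'ᵢ ≠ 0`; so every `x` in the image of the projection is absolutely
indecomposable. Conversely, if `x` is absolutely indecomposable then every endomorphism is a scalar
`c` plus a nilpotent, so the pairing is `c ∑ᵢ λᵢ rᵢ = 0`. Moreover `#Aut x = (1 - q⁻¹) · #End x` for
such `x`, and by Burnside's lemma the sum of `#Aut x` over all of them is `#GL_{α,r}` times the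
number of their orbits.
-/

open Polynomial

/-! ### Finite monoids, group actions and algebras -/

theorem exists_isIdempotentElem_pow {M : Type*} [Monoid M] [Finite M] (a : M) :
    ∃ n ≠ 0, IsIdempotentElem (a ^ n) := by
  obtain ⟨m, d, hd, hperiod⟩ : ∃ m d, d ≠ 0 ∧ a ^ (m + d) = a ^ m := by
    obtain ⟨i, j, hij, h⟩ := Finite.exists_ne_map_eq_of_infinite (a ^ · : ℕ → M)
    rcases hij.lt_or_gt with hlt | hlt
    · exact ⟨i, j - i, by omega, by rw [Nat.add_sub_of_le hlt.le]; exact h.symm⟩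
    · exact ⟨j, i - j, by omega, by rw [Nat.add_sub_of_le hlt.le]; exact h⟩
  have hmul (k : ℕ) : a ^ (m + k * d) = a ^ m := by
    induction k with
    | zero => simp
    | succ k ih => rw [add_mul, one_mul, ← add_assoc, add_right_comm, pow_add, hperiod, ← pow_add,
        add_comm, add_comm, ih]
  have hle : m ≤ (m + 1) * d :=
    (Nat.le_succ m).trans (Nat.le_mul_of_pos_right _ (Nat.pos_of_ne_zero hd))
  obtain ⟨e, he⟩ := Nat.exists_eq_add_of_le hle
  refine ⟨(m + 1) * d, by positivity, ?_⟩
  calc a ^ ((m + 1) * d) * a ^ ((m + 1) * d) = a ^ (m + (m + 1) * d) * a ^ e := by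
        rw [← pow_add, ← pow_add]; congr 1; omega
    _ = a ^ ((m + 1) * d) := by rw [hmul, ← pow_add, ← he]

theorem sum_card_stabilizer_eq_card_orbits_mul_card_group (H X : Type*) [Group H] [MulAction H X]
    [Fintype X] [Finite H] :
    ∑ x : X, Nat.card (MulAction.stabilizer H x) =
      Nat.card (MulAction.orbitRel.Quotient H X) * Nat.card H := by
  rw [← Nat.card_sigma, ← Nat.card_prod]
  refine Nat.card_congr (Equiv.trans ?_ (MulAction.sigmaFixedByEquivOrbitsProdGroup H X))
  exact
    { toFun := fun p => ⟨p.2.1, p.1, p.2.2⟩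
      invFun := fun p => ⟨p.2.1, p.1, p.2.2⟩ }

section SplitLocal

variable {K S : Type*} [Field K] [Ring S] [Algebra K S]

theorem eq_of_isNilpotent_sub_algebraMap [Nontrivial S] {a : S} {c d : K}
    (hc : IsNilpotent (a - algebraMap K S c)) (hd : IsNilpotent (a - algebraMap K S d)) :
    c = d := by
  have hcomm : Commute (a - algebraMap K S d) (a - algebraMap K S c) :=
    ((Commute.refl a).sub_left (Algebra.commutes d a)).sub_right
      (Algebra.commutes c (a - algebraMap K S d)).symm
  have hnil := hcomm.isNilpotent_sub hd hc
  rw [sub_sub_sub_cancel_left, ← map_sub,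
    IsNilpotent.map_iff (FaithfulSMul.algebraMap_injective K S)] at hnil
  exact sub_eq_zero.1 hnil.eq_zero

theorem isUnit_iff_not_isNilpotent_of_isNilpotent_sub [Nontrivial S] {a : S} {c : K}
    (h : IsNilpotent (a - algebraMap K S c)) : IsUnit a ↔ ¬ IsNilpotent a := by
  refine ⟨fun ha hnil => hnil.not_isUnit ha, fun ha => ?_⟩
  have hc : c ≠ 0 := by rintro rfl; exact ha (by simpa using h)
  simpa using h.isUnit_add_left_of_commute ((isUnit_iff_ne_zero.2 hc).map (algebraMap K S))
    (Algebra.commutes c (a - algebraMap K S c)).symm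

variable (K S) in
/-- Every element of the `K`-algebra `S` is the sum of a scalar and a nilpotent element. When `S` is
nonzero and finite-dimensional, this says that `S` is local with residue field `K`. -/
def IsSplitLocal : Prop :=
  ∀ a : S, ∃ c : K, IsNilpotent (a - algebraMap K S c)

theorem IsSplitLocal.card_units [Nontrivial S] [Finite S] (h : IsSplitLocal K S) :
    (Nat.card Sˣ : ℚ) = Nat.card S * (1 - (Nat.card K : ℚ)⁻¹) := by
  have : Finite K := .of_injective _ (FaithfulSMul.algebraMap_injective K S)
  choose res hres using h
  have hmul : Nat.card S = Nat.card K * Nat.card {a : S // IsNilpotent a} := by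
    rw [← Nat.card_prod]
    refine Nat.card_congr
      { toFun a := (res a, ⟨_, hres a⟩)
        invFun p := algebraMap K S p.1 + p.2
        left_inv a := add_sub_cancel _ a
        right_inv p := ?_ }
    have hp : res (algebraMap K S p.1 + p.2) = p.1 :=
      eq_of_isNilpotent_sub_algebraMap (hres _) (by simpa using p.2.2)
    ext <;> simp [hp]
  have hadd : Nat.card S = Nat.card {a : S // IsNilpotent a} + Nat.card Sˣ := by
    classical
    rw [← Nat.card_congr (Equiv.sumCompl fun a : S => IsNilpotent a), Nat.card_sum,
      Nat.card_congr (Submonoid.unitsTypeEquivIsUnitSubmonoid.toEquiv.trans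
        (Equiv.subtypeEquivRight fun a =>
          isUnit_iff_not_isNilpotent_of_isNilpotent_sub (hres a)))]
  have hK : (Nat.card K : ℚ) ≠ 0 := Nat.cast_ne_zero.2 Nat.card_pos.ne'
  have hmul' : (Nat.card S : ℚ) = Nat.card K * Nat.card {a : S // IsNilpotent a} := by
    exact_mod_cast hmul
  have hadd' : (Nat.card S : ℚ) = Nat.card {a : S // IsNilpotent a} + Nat.card Sˣ := by
    exact_mod_cast hadd
  calc (Nat.card Sˣ : ℚ) = Nat.card S - Nat.card {a : S // IsNilpotent a} :=
        eq_sub_of_add_eq' hadd'.symm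
    _ = Nat.card S * (1 - (Nat.card K : ℚ)⁻¹) := by rw [hmul']; field_simp

theorem isUnit_aeval_prod_X_sub_C {a : S} {s : Multiset K}
    (h : ∀ c ∈ s, IsUnit (a - algebraMap K S c)) :
    IsUnit (aeval a (s.map fun c => X - C c).prod) := by
  induction s using Multiset.induction with
  | empty => simp
  | cons c s ih =>
    rw [Multiset.map_cons, Multiset.prod_cons, map_mul]
    refine IsUnit.mul ?_ (ih fun d hd => h d (Multiset.mem_cons_of_mem hd))
    simpa using h c (Multiset.mem_cons_self c s)

theorem exists_isNilpotent_sub_of_splits [Nontrivial S] {a : S}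
    (ha : ∀ c : K, IsNilpotent (a - algebraMap K S c) ∨ IsUnit (a - algebraMap K S c))
    {P : K[X]} (hP : P ≠ 0) (hsplit : P.Splits) (hroot : aeval a P = 0) :
    ∃ c : K, IsNilpotent (a - algebraMap K S c) := by
  by_contra! hnil
  rw [hsplit.eq_prod_roots, map_mul, aeval_C] at hroot
  have hlead : IsUnit (algebraMap K S P.leadingCoeff) :=
    (isUnit_iff_ne_zero.2 (leadingCoeff_ne_zero.2 hP)).map _
  exact not_isUnit_zero (hroot ▸ hlead.mul
    (isUnit_aeval_prod_X_sub_C fun c _ => (ha c).resolve_left (hnil c)))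

theorem isNilpotent_sub_algebraMap_iff_exists_pow_card [Fintype K] [Nontrivial S] {a : S} {c : K} :
    IsNilpotent (a - algebraMap K S c) ↔
      ∃ m : ℕ, a ^ Fintype.card K ^ m = algebraMap K S c := by
  obtain ⟨p, _⟩ := CharP.exists K
  obtain ⟨n, hp, hcard⟩ := FiniteField.card K p
  have : Fact p.Prime := ⟨hp⟩
  have : CharP S p := charP_of_injective_algebraMap (FaithfulSMul.algebraMap_injective K S) p
  have hfrob (m : ℕ) : (a - algebraMap K S c) ^ Fintype.card K ^ m =
      a ^ Fintype.card K ^ m - algebraMap K S c := by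
    rw [hcard, ← pow_mul, sub_pow_char_pow_of_commute p _ (Algebra.commutes c a).symm, ← map_pow,
      pow_mul, ← hcard, FiniteField.pow_card_pow]
  constructor
  · rintro ⟨m, hm⟩
    refine ⟨m, sub_eq_zero.1 ?_⟩
    rw [← hfrob]
    exact pow_eq_zero_of_le (Nat.lt_pow_self Fintype.one_lt_card).le hm
  · rintro ⟨m, hm⟩
    exact ⟨_, (hfrob m).trans (sub_eq_zero.2 hm)⟩

end SplitLocal

/-! ### Idempotent matrices over local rings -/

section IsCompl

variable {A M : Type*} [CommRing A] [AddCommGroup M] [Module A M] {P Q : Submodule A M}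

theorem finite_of_isCompl [Module.Finite A M] (h : IsCompl P Q) : Module.Finite A P :=
  .of_surjective (P.projectionOnto Q h) (Submodule.projectionOnto_surjective h)

theorem free_of_isCompl [IsLocalRing A] [Module.Finite A M] [Module.Projective A M]
    (h : IsCompl P Q) : Module.Free A P :=
  have := finite_of_isCompl h
  have : Module.Projective A P := .of_split P.subtype (P.projectionOnto Q h)
    (Submodule.projectionOnto_comp_subtype h)
  Module.free_of_flat_of_isLocalRing

end IsCompl

open Module in
theorem exists_basis_of_isIdempotentElem {A M : Type*} [CommRing A] [IsLocalRing A]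
    [AddCommGroup M] [Module A M] [Module.Finite A M] [Module.Free A M] {f : M →ₗ[A] M}
    (hf : IsIdempotentElem f) :
    ∃ m ≤ finrank A M, ∃ b : Basis (Fin (finrank A M)) A M,
      ∀ k, f (b k) = if (k : ℕ) < m then b k else 0 := by
  have hc := LinearMap.IsIdempotentElem.isCompl hf
  have := free_of_isCompl hc
  have := free_of_isCompl hc.symm
  have := finite_of_isCompl hc
  have := finite_of_isCompl hc.symm
  have hrank : finrank A f.range + finrank A f.ker = finrank A M := by
    rw [← finrank_prod, (Submodule.prodEquivOfIsCompl _ _ hc).finrank_eq]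
  let E := finSumFinEquiv.trans (finCongr hrank)
  let b := (((finBasis A f.range).prod (finBasis A f.ker)).map
    (Submodule.prodEquivOfIsCompl _ _ hc)).reindex E
  refine ⟨finrank A f.range, hrank ▸ Nat.le_add_right _ _, b, fun k => ?_⟩
  obtain ⟨k | k, rfl⟩ := E.surjective k
  · obtain ⟨v, hv⟩ := (finBasis A f.range k).2
    have hb : b (E (Sum.inl k)) = f v := by simp [b, hv]
    rw [hb, if_pos (by simp [E])]
    exact LinearMap.congr_fun hf v
  · rw [if_neg (by simp [E])]
    simp [b]

theorem exists_conj_eq_diagonal_of_isIdempotentElem {A : Type*} [CommRing A] [IsLocalRing A]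
    {n : ℕ} {e : Matrix (Fin n) (Fin n) A} (he : IsIdempotentElem e) :
    ∃ m ≤ n, ∃ g : (Matrix (Fin n) (Fin n) A)ˣ,
      g.val * e * g⁻¹.val = Matrix.diagonal fun k : Fin n => if (k : ℕ) < m then 1 else 0 := by
  have hf : IsIdempotentElem (Matrix.toLin' e) := by
    rw [IsIdempotentElem, Module.End.mul_eq_comp, ← Matrix.toLin'_mul, he.eq]
  have h := exists_basis_of_isIdempotentElem hf
  rw [Module.finrank_fin_fun] at h
  obtain ⟨m, hm, b, hb⟩ := h
  let s := Pi.basisFun A (Fin n)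
  refine ⟨m, hm, ⟨b.toMatrix s, s.toMatrix b, b.toMatrix_mul_toMatrix_flip s,
    s.toMatrix_mul_toMatrix_flip b⟩, ?_⟩
  have h := basis_toMatrix_mul_linearMap_toMatrix_mul_basis_toMatrix b s b s (Matrix.toLin' e)
  rw [LinearMap.toMatrix_eq_toMatrix', LinearMap.toMatrix'_toLin'] at h
  refine h.trans ?_
  ext k l
  rw [LinearMap.toMatrix_apply, hb, Matrix.diagonal_apply]
  by_cases hl : (l : ℕ) < m <;> by_cases hkl : k = l <;> simp [hl, hkl]


/-! ### Truncated polynomial rings -/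

namespace TruncRing

section CommRing

variable {F K : Type} [CommRing F] [CommRing K] {α : ℕ} (φ : F →+* K)

theorem truncMap_mk (p : F[X]) :
    truncMap φ α (Ideal.Quotient.mk _ p) = Ideal.Quotient.mk _ (p.map φ) := by
  simp [truncMap]

theorem truncMap_tvar : truncMap φ α (tvar F α) = tvar K α := by
  rw [tvar, truncMap_mk, map_X, tvar]

theorem truncMap_algebraMap (c : F) :
    truncMap φ α (algebraMap F _ c) = algebraMap K _ (φ c) := by
  have hC : algebraMap F (TruncRing F α) c = Ideal.Quotient.mk _ (C c) := rfl
  rw [hC, truncMap_mk, map_C]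
  rfl

theorem tvar_pow_self : tvar F α ^ α = 0 := by
  rw [tvar, ← map_pow, Ideal.Quotient.eq_zero_iff_mem]
  exact Ideal.mem_span_singleton_self _

variable (F) [NeZero α]

/-- Reduction modulo `t`, i.e. evaluation of a truncated polynomial at `t = 0`. -/
noncomputable def eval₀ : TruncRing F α →ₐ[F] F :=
  Ideal.Quotient.liftₐ _ (aeval (0 : F)) (by
    intro a ha
    obtain ⟨c, rfl⟩ := Ideal.mem_span_singleton.1 ha
    simp [NeZero.ne α])

theorem eval₀_mk (p : F[X]) : eval₀ F (α := α) (Ideal.Quotient.mk _ p) = p.coeff 0 := by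
  simp [eval₀, Ideal.Quotient.liftₐ_apply, coeff_zero_eq_eval_zero]

variable {F}

theorem eval₀_truncMap (a : TruncRing F α) : eval₀ K (truncMap φ α a) = φ (eval₀ F a) := by
  obtain ⟨p, rfl⟩ := Ideal.Quotient.mk_surjective a
  rw [truncMap_mk, eval₀_mk, eval₀_mk, coeff_map]

theorem tvar_dvd_sub_algebraMap_eval₀ (a : TruncRing F α) :
    tvar F α ∣ a - algebraMap F _ (eval₀ F a) := by
  obtain ⟨p, rfl⟩ := Ideal.Quotient.mk_surjective a
  rw [eval₀_mk]
  exact map_dvd (Ideal.Quotient.mk _) X_dvd_sub_C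

theorem tvar_pow_mul (a : TruncRing F α) :
    tvar F α ^ (α - 1) * a = eval₀ F a • tvar F α ^ (α - 1) := by
  obtain ⟨b, hb⟩ := tvar_dvd_sub_algebraMap_eval₀ a
  have h : tvar F α ^ (α - 1) * (a - algebraMap F _ (eval₀ F a)) = 0 := by
    rw [hb, ← mul_assoc, pow_sub_one_mul (NeZero.ne α), tvar_pow_self, zero_mul]
  rw [mul_sub, sub_eq_zero] at h
  rw [h, mul_comm]
  exact (Algebra.smul_def _ _).symm

theorem isNilpotent_sub_algebraMap_eval₀ (a : TruncRing F α) :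
    IsNilpotent (a - algebraMap F _ (eval₀ F a)) := by
  refine ⟨α, zero_dvd_iff.1 ?_⟩
  rw [← tvar_pow_self]
  exact pow_dvd_pow_of_dvd (tvar_dvd_sub_algebraMap_eval₀ a) α

theorem isUnit_iff_isUnit_eval₀ {a : TruncRing F α} : IsUnit a ↔ IsUnit (eval₀ F a) := by
  refine ⟨fun h => h.map _, fun h => ?_⟩
  simpa using (isNilpotent_sub_algebraMap_eval₀ a).isUnit_add_left_of_commute
    (h.map (algebraMap F (TruncRing F α))) (Commute.all _ _)

theorem tvar_pow_ne_zero [Nontrivial F] : tvar F α ^ (α - 1) ≠ 0 := by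
  rw [tvar, ← map_pow, Ne, Ideal.Quotient.eq_zero_iff_mem, Ideal.mem_span_singleton, X_pow_dvd_iff]
  intro h
  simpa using h (α - 1) (Nat.sub_one_lt (NeZero.ne α))

end CommRing

section Field

variable {F K : Type} [Field F] [Field K] {α : ℕ} (φ : F →+* K)

instance finiteDimensional : FiniteDimensional F (TruncRing F α) :=
  (monic_X_pow α).finite_quotient

instance finite [Finite F] : Finite (TruncRing F α) :=
  Module.finite_of_finite F

theorem finrank_eq : Module.finrank F (TruncRing F α) = α :=
  finrank_quotient_span_eq_natDegree.trans (natDegree_X_pow α)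

variable [NeZero α]

instance isLocalRing : IsLocalRing (TruncRing F α) :=
  have : IsLocalHom (eval₀ F (α := α)).toRingHom := ⟨fun _ => isUnit_iff_isUnit_eval₀.2⟩
  (eval₀ F (α := α)).toRingHom.domain_isLocalRing

theorem dvd_tvar_pow_of_ne_zero {a : TruncRing F α} (ha : a ≠ 0) : a ∣ tvar F α ^ (α - 1) := by
  obtain ⟨p, rfl⟩ := Ideal.Quotient.mk_surjective a
  have hp : p ≠ 0 := by rintro rfl; simp at ha
  obtain ⟨u, hpu, hu⟩ := exists_eq_pow_rootMultiplicity_mul_and_not_dvd p hp 0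
  rw [C_0, sub_zero] at hpu hu
  have hunit : IsUnit (Ideal.Quotient.mk (Ideal.span {(X : F[X]) ^ α}) u) := by
    rw [isUnit_iff_isUnit_eval₀, eval₀_mk, isUnit_iff_ne_zero]
    exact fun h => hu (X_dvd_iff.2 h)
  rw [hpu, map_mul, map_pow] at ha ⊢
  change tvar F α ^ _ * _ ≠ 0 at ha
  refine hunit.mul_right_dvd.2 (pow_dvd_pow (tvar F α) (Nat.le_sub_one_of_lt ?_))
  by_contra! hle
  exact ha (by rw [pow_eq_zero_of_le hle tvar_pow_self, zero_mul])

theorem truncMap_injective : Function.Injective (truncMap φ α) := by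
  refine (injective_iff_map_eq_zero _).2 fun a ha => by_contra fun h => ?_
  have hdvd := map_dvd (truncMap φ α) (dvd_tvar_pow_of_ne_zero h)
  rw [ha, zero_dvd_iff, map_pow, truncMap_tvar] at hdvd
  exact tvar_pow_ne_zero hdvd

end Field

end TruncRing

/-! ### Frobenius forms -/

/-- The linear form `ε` on the commutative `F`-algebra `R` is a Frobenius form: the bilinear form
`(a, b) ↦ ε (a * b)` is nondegenerate. -/
def IsFrobeniusForm {F R : Type*} [CommRing F] [CommRing R] [Algebra F R] (ε : R →ₗ[F] F) : Prop :=
  ∀ a, (∀ b, ε (a * b) = 0) → a = 0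

theorem TruncRing.exists_isFrobeniusForm (F : Type) [Field F] (α : ℕ) [NeZero α] :
    ∃ ε : TruncRing F α →ₗ[F] F, IsFrobeniusForm ε := by
  -- `t^(α-1)` spans the socle of `F[t]/(t^α)`, so any linear form not killing it will do.
  obtain ⟨ε, hε⟩ : ∃ ε : Module.Dual F (TruncRing F α), ε (tvar F α ^ (α - 1)) ≠ 0 := by
    by_contra! h
    exact tvar_pow_ne_zero ((Module.forall_dual_apply_eq_zero_iff F _).1 h)
  refine ⟨ε, fun a ha => by_contra fun hne => ?_⟩
  obtain ⟨b, hb⟩ := dvd_tvar_pow_of_ne_zero hne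
  exact hε (hb ▸ ha b)


theorem IsFrobeniusForm.matrix_eq_zero {F R m n : Type*} [CommRing F] [CommRing R] [Algebra F R]
    [Fintype m] [Fintype n] {ε : R →ₗ[F] F} (hε : IsFrobeniusForm ε) {A : Matrix m n R}
    (h : ∀ B : Matrix n m R, ε (A * B).trace = 0) : A = 0 := by
  classical
  ext k l
  refine hε _ fun b => ?_
  have hb := h (Matrix.single l k b)
  rwa [Matrix.trace_mul_single, MulOpposite.smul_eq_mul_unop] at hb

/-! ### Products of matrix rings -/

/-- The ring `∏ᵢ Mat_{rᵢ}(R)`, in which both endomorphisms and values of the moment map live. -/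
abbrev QMat {V : Type*} (R : Type*) (r : V → ℕ) : Type _ :=
  ∀ i : V, Matrix (Fin (r i)) (Fin (r i)) R

/-- The group `∏ᵢ GL_{rᵢ}(R)`. -/
abbrev QGL {V : Type*} (R : Type*) [CommRing R] (r : V → ℕ) : Type _ :=
  ∀ i : V, (Matrix (Fin (r i)) (Fin (r i)) R)ˣ

theorem map_trace_of_isNilpotent_sub {F R n : Type*} [CommRing F] [IsReduced F] [CommRing R]
    [Algebra F R] [Fintype n] [DecidableEq n] (ε : R →ₐ[F] F) {A : Matrix n n R} {c : F}
    (h : IsNilpotent (A - algebraMap F _ c)) : ε A.trace = c * Fintype.card n := by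
  have htrace := ((Matrix.isNilpotent_trace_of_isNilpotent h).map ε).eq_zero
  rw [Matrix.trace_sub, Matrix.algebraMap_eq_diagonal, Matrix.trace_diagonal, map_sub,
    sub_eq_zero] at htrace
  simpa [mul_comm] using htrace

namespace QMat

theorem natCard_eq {V : Type*} [Fintype V] (R : Type*) (r : V → ℕ) :
    Nat.card (QMat R r) = Nat.card R ^ ∑ i, r i * r i := by
  simp [Matrix, Nat.card_pi, ← pow_mul, Finset.prod_pow_eq_pow_sum]

section Basic

variable {V R R' : Type*} [CommRing R] [CommRing R'] {r : V → ℕ} (φ : R →+* R')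

theorem nontrivial [Nontrivial R] (hr : r ≠ 0) : Nontrivial (QMat R r) := by
  obtain ⟨i, hi⟩ := Function.ne_iff.1 hr
  have : Nonempty (Fin (r i)) := ⟨⟨0, Nat.pos_of_ne_zero hi⟩⟩
  exact Pi.nontrivial_at i

/-- Entrywise application of a ring homomorphism `∏ᵢ Mat_{rᵢ}(R) → ∏ᵢ Mat_{rᵢ}(R')`. -/
def map (φ : R →+* R') (r : V → ℕ) : QMat R r →+* QMat R' r :=
  RingHom.pi fun i => φ.mapMatrix.comp (Pi.evalRingHom _ i)

theorem map_apply (ξ : QMat R r) (i : V) : map φ r ξ i = (ξ i).map φ := rfl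

theorem map_injective {φ : R →+* R'} (hφ : Function.Injective φ) :
    Function.Injective (map φ r) := fun ξ η h => by
  ext i k l
  exact hφ (congrFun (congrFun (congrFun h i) k) l)

theorem map_single [DecidableEq V] (i : V) (A : Matrix (Fin (r i)) (Fin (r i)) R) :
    map φ r (Pi.single i A) = Pi.single i (A.map φ) := by
  funext j
  rw [map_apply]
  obtain rfl | h := eq_or_ne j i
  · simp
  · rw [Pi.single_eq_of_ne h, Pi.single_eq_of_ne h]
    exact Matrix.map_zero φ (map_zero φ)

theorem sum_trace_mul_single [Fintype V] [DecidableEq V] (ξ : QMat R r) (i : V)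
    (A : Matrix (Fin (r i)) (Fin (r i)) R) :
    ∑ j, (ξ j * (Pi.single i A : QMat R r) j).trace = (ξ i * A).trace := by
  rw [Finset.sum_eq_single i (fun j _ hj => by rw [Pi.single_eq_of_ne hj]; simp) (by simp),
    Pi.single_eq_same]

end Basic

section TraceForm

variable {V F R : Type*} [Fintype V] [CommRing F] [CommRing R] [Algebra F R] {r : V → ℕ}
  {ε : R →ₗ[F] F}

/-- The bilinear form `(ξ, η) ↦ ε (∑ᵢ tr (ξᵢ ηᵢ))` on `∏ᵢ Mat_{rᵢ}(R)`. -/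
noncomputable def traceForm (ε : R →ₗ[F] F) (r : V → ℕ) : LinearMap.BilinForm F (QMat R r) :=
  LinearMap.mk₂ F (fun ξ η => ε (∑ i, (ξ i * η i).trace))
    (fun ξ ξ' η => by simp [add_mul, Finset.sum_add_distrib])
    (fun c ξ η => by simp [← Finset.smul_sum])
    (fun ξ η η' => by simp [mul_add, Finset.sum_add_distrib])
    (fun c ξ η => by simp [← Finset.smul_sum])

theorem traceForm_apply (ξ η : QMat R r) :
    traceForm ε r ξ η = ε (∑ i, (ξ i * η i).trace) := rfl

theorem traceForm_isSymm : (traceForm ε r).IsSymm :=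
  ⟨fun ξ η => congrArg ε (Finset.sum_congr rfl fun i _ => Matrix.trace_mul_comm (ξ i) (η i))⟩

theorem traceForm_nondegenerate (hε : IsFrobeniusForm ε) : (traceForm ε r).Nondegenerate := by
  classical
  have hrefl : (traceForm ε r).IsRefl := traceForm_isSymm.isRefl
  refine (LinearMap.IsRefl.nondegenerate_iff_separatingLeft hrefl).2 ?_
  refine fun ξ hξ => funext fun i => hε.matrix_eq_zero fun B => ?_
  rw [← sum_trace_mul_single]
  exact hξ (Pi.single i B)

end TraceForm

end QMat

/-! ### Endomorphism algebras and decomposability -/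

section Representations

variable {G : FinQuiver} {R R' : Type} [CommRing R] [CommRing R'] {r : G.V → ℕ} (φ : R →+* R')

/-- The change-of-basis action of `∏ᵢ GL_{rᵢ}(R)` on representations of rank `r`. -/
instance qrepMulAction : MulAction (QGL R r) (QRep G R r) where
  smul := glAct G
  one_smul x := by
    funext a
    change glAct G 1 x a = x a
    simp [glAct]
  mul_smul g h x := by
    funext a
    change glAct G (g * h) x a = glAct G g (glAct G h x) a
    simp [glAct, Matrix.mul_assoc]

theorem glAct_map (g : QGL R r) (x : QRep G R r) :
    (fun a => (glAct G g x a).map φ) =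
      glAct G (fun i => Units.map φ.mapMatrix.toMonoidHom (g i)) (fun a => (x a).map φ) := by
  funext a
  simp only [glAct, Matrix.map_mul]
  rfl

/-- The endomorphism algebra of a locally free representation. -/
def endAlg (x : QRep G R r) : Subalgebra R (QMat R r) where
  carrier := {ξ | ∀ a, ξ (G.t a) * x a = x a * ξ (G.s a)}
  mul_mem' {ξ η} hξ hη a := by
    rw [Pi.mul_apply, Pi.mul_apply, Matrix.mul_assoc, hη a, ← Matrix.mul_assoc, hξ a,
      Matrix.mul_assoc]
  add_mem' {ξ η} hξ hη a := by
    rw [Pi.add_apply, Pi.add_apply, Matrix.add_mul, Matrix.mul_add, hξ a, hη a]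
  algebraMap_mem' c a := by
    simp [Algebra.algebraMap_eq_smul_one]

theorem mem_endAlg {x : QRep G R r} {ξ : QMat R r} :
    ξ ∈ endAlg x ↔ ∀ a, ξ (G.t a) * x a = x a * ξ (G.s a) := Iff.rfl

/-- Extension of scalars `End x → End (x ⊗ R')` along a ring homomorphism `R → R'`. -/
def endAlgMap (x : QRep G R r) :
    endAlg x →+* endAlg (G := G) (r := r) fun a => (x a).map φ :=
  ((QMat.map φ r).comp (endAlg x).val.toRingHom).codRestrict _ fun ξ a => by
    change (ξ.1 (G.t a)).map φ * (x a).map φ = (x a).map φ * (ξ.1 (G.s a)).map φ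
    rw [← Matrix.map_mul, ξ.2 a, Matrix.map_mul]

theorem endAlgMap_apply (x : QRep G R r) (ξ : endAlg x) (i : G.V) :
    (endAlgMap φ x ξ).1 i = (ξ.1 i).map φ := rfl

theorem endAlgMap_injective {φ : R →+* R'} (hφ : Function.Injective φ) (x : QRep G R r) :
    Function.Injective (endAlgMap φ x) := fun _ _ h =>
  Subtype.ext (QMat.map_injective hφ (congrArg Subtype.val h))

theorem mem_endAlg_glAct {g : QGL R r} {x : QRep G R r} {ξ : QMat R r} :
    ξ ∈ endAlg (glAct G g x) ↔ (fun i => (g i)⁻¹.val * ξ i * (g i).val) ∈ endAlg x := by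
  refine forall_congr' fun a => ⟨fun h => ?_, fun h => ?_⟩
  · simpa [glAct, Matrix.mul_assoc] using
      congrArg (fun M => (g (G.t a))⁻¹.val * M * (g (G.s a)).val) h
  · simpa [glAct, Matrix.mul_assoc] using
      congrArg (fun M => (g (G.t a)).val * M * (g (G.s a))⁻¹.val) h

theorem mem_stabilizer_iff_mem_endAlg {g : QGL R r} {x : QRep G R r} :
    g ∈ MulAction.stabilizer (QGL R r) x ↔ (fun i => (g i).val) ∈ endAlg x := by
  rw [MulAction.mem_stabilizer_iff, mem_endAlg, funext_iff]
  change (∀ a, glAct G g x a = x a) ↔ _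
  refine forall_congr' fun a => ⟨fun h => ?_, fun h => ?_⟩
  · nth_rw 2 [← h]
    simp [glAct, Matrix.mul_assoc]
  · rw [glAct, h, Matrix.mul_assoc]
    simp

theorem natCard_stabilizer (x : QRep G R r) :
    Nat.card (MulAction.stabilizer (QGL R r) x) = Nat.card (endAlg x)ˣ :=
  Nat.card_congr
    { toFun g := ⟨⟨_, mem_stabilizer_iff_mem_endAlg.1 g.2⟩,
        ⟨_, mem_stabilizer_iff_mem_endAlg.1 (inv_mem g.2)⟩,
        Subtype.ext (funext fun i => (g.1 i).mul_inv),
        Subtype.ext (funext fun i => (g.1 i).inv_mul)⟩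
      invFun u := ⟨MulEquiv.piUnits (Units.map (endAlg x).val.toMonoidHom u),
        mem_stabilizer_iff_mem_endAlg.2 u.val.2⟩
      left_inv _ := Subtype.ext (funext fun _ => Units.ext rfl)
      right_inv _ := Units.ext rfl }

/-- The idempotent of `∏ᵢ Mat_{rᵢ}(R)` projecting onto the first `r'ᵢ` coordinates. -/
def blockIdem {V : Type*} (R : Type*) [CommRing R] (r r' : V → ℕ) : QMat R r :=
  fun i => Matrix.diagonal fun k => if (k : ℕ) < r' i then 1 else 0

theorem isBlockDiag_iff_blockIdem_mem {x : QRep G R r} {r' : G.V → ℕ} :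
    (∀ a, IsBlockDiag (r' (G.t a)) (r' (G.s a)) (x a)) ↔ blockIdem R r r' ∈ endAlg x := by
  refine forall_congr' fun a => ?_
  rw [← Matrix.ext_iff]
  refine forall₂_congr fun k l => ?_
  rw [blockIdem, blockIdem, Matrix.diagonal_mul, Matrix.mul_diagonal]
  by_cases hk : (k : ℕ) < r' (G.t a) <;> by_cases hl : (l : ℕ) < r' (G.s a) <;>
    simp [hk, hl, eq_comm]

theorem trace_blockIdem {V : Type*} {R : Type*} [CommRing R] {r r' : V → ℕ} {i : V}
    (h : r' i ≤ r i) : (blockIdem R r r' i).trace = r' i := by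
  rw [blockIdem, Matrix.trace_diagonal, Finset.sum_boole, Fin.card_filter_val_lt, min_eq_right h]

namespace Decomposable

theorem of_glAct {g : QGL R r} {x : QRep G R r} (h : Decomposable G (glAct G g x)) :
    Decomposable G x := by
  obtain ⟨r', r'', hadd, hr', hr'', h, hh⟩ := h
  have hmul : glAct G (h * g) x = glAct G h (glAct G g x) := mul_smul h g x
  exact ⟨r', r'', hadd, hr', hr'', h * g, by rwa [hmul]⟩

theorem of_isIdempotentElem [IsLocalRing R] {x : QRep G R r} {e : endAlg x}
    (he : IsIdempotentElem e) (h0 : e ≠ 0) (h1 : e ≠ 1) : Decomposable G x := by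
  choose r' hr' g hg using fun i =>
    exists_conj_eq_diagonal_of_isIdempotentElem (congrFun (congrArg Subtype.val he) i)
  have hconj (i : G.V) : e.1 i = (g i)⁻¹.val * blockIdem R r r' i * (g i).val := by
    rw [blockIdem, ← hg i]
    simp [mul_assoc]
  refine ⟨r', fun i => r i - r' i, fun i => Nat.add_sub_of_le (hr' i), ?_, ?_, g, ?_⟩
  · rintro rfl
    refine h0 (Subtype.ext (funext fun i => ?_))
    rw [hconj]
    simp [blockIdem]
  · refine fun hr => h1 (Subtype.ext (funext fun i => ?_))
    have hle : r i ≤ r' i := Nat.sub_eq_zero_iff_le.1 (congrFun hr i)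
    have hb : blockIdem R r r' i = 1 := by
      rw [blockIdem, ← Matrix.diagonal_one]
      exact congrArg _ (funext fun k => if_pos (k.2.trans_le hle))
    rw [hconj, hb]
    simp
  · rw [isBlockDiag_iff_blockIdem_mem, mem_endAlg_glAct]
    simpa only [← hconj] using e.2

theorem exists_mem_endAlg_trace {x : QRep G R r} (h : Decomposable G x) :
    ∃ r' : G.V → ℕ, r' ≠ 0 ∧ (∀ i, r' i ≤ r i) ∧ r' ≠ r ∧
      ∃ e ∈ endAlg x, ∀ i, (e i).trace = r' i := by
  obtain ⟨r', r'', hadd, hr', hr'', g, hg⟩ := h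
  have hle (i : G.V) : r' i ≤ r i := hadd i ▸ Nat.le_add_right _ _
  refine ⟨r', hr', hle, ?_, _, mem_endAlg_glAct.1 (isBlockDiag_iff_blockIdem_mem.1 hg),
    fun i => ?_⟩
  · rintro rfl
    exact hr'' (funext fun i => by simpa using hadd i)
  · rw [Matrix.trace_mul_comm, ← Matrix.mul_assoc]
    simp [trace_blockIdem (hle i)]

end Decomposable

theorem isNilpotent_or_isUnit_of_not_decomposable [Finite R] [IsLocalRing R] {x : QRep G R r}
    (hx : ¬ Decomposable G x) (ξ : endAlg x) : IsNilpotent ξ ∨ IsUnit ξ := by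
  obtain ⟨n, hn, hidem⟩ := exists_isIdempotentElem_pow ξ
  by_cases h0 : ξ ^ n = 0
  · exact Or.inl ⟨n, h0⟩
  by_cases h1 : ξ ^ n = 1
  · exact Or.inr (IsUnit.of_pow_eq_one h1 hn)
  · exact absurd (.of_isIdempotentElem hidem h0 h1) hx

end Representations


/-! ### The moment map and its fibres -/

section MomentMap

variable {G : FinQuiver} {R : Type} [CommRing R] {r : G.V → ℕ}

theorem momentMap_eq_sum_single (x : QRep G R r) (y : QCoRep G R r) :
    momentMap G x y = ∑ a, (Pi.single (G.t a) (x a * y a) : QMat R r) -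
      ∑ a, (Pi.single (G.s a) (y a * x a) : QMat R r) := by
  have hsingle (i j : G.V) (M : Matrix (Fin (r j)) (Fin (r j)) R) :
      (if h : j = i then cast (congrArg (fun v => Matrix (Fin (r v)) (Fin (r v)) R) h) M else 0) =
        (Pi.single j M : QMat R r) i := by
    by_cases h : j = i
    · subst h; simp
    · rw [dif_neg h, Pi.single_eq_of_ne (Ne.symm h)]
  funext i
  simp only [momentMap, hsingle, Pi.sub_apply, Finset.sum_apply]

theorem momentMap_map {R' : Type} [CommRing R'] (φ : R →+* R') (x : QRep G R r)
    (y : QCoRep G R r) :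
    momentMap G (fun a => (x a).map φ) (fun a => (y a).map φ) =
      QMat.map φ r (momentMap G x y) := by
  simp only [momentMap_eq_sum_single, map_sub, map_sum, QMat.map_single, Matrix.map_mul]

theorem sum_trace_mul_momentMap (ξ : QMat R r) (x : QRep G R r) (y : QCoRep G R r) :
    ∑ i, (ξ i * momentMap G x y i).trace =
      ∑ a, ((ξ (G.t a) * x a - x a * ξ (G.s a)) * y a).trace := by
  simp only [momentMap_eq_sum_single, Pi.sub_apply, Finset.sum_apply, mul_sub, Finset.mul_sum,
    Matrix.trace_sub, Matrix.trace_sum, Finset.sum_sub_distrib]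
  rw [Finset.sum_comm, Finset.sum_comm (s := Finset.univ (α := G.V))]
  simp only [QMat.sum_trace_mul_single, ← Finset.sum_sub_distrib]
  refine Finset.sum_congr rfl fun a _ => ?_
  rw [Matrix.sub_mul, Matrix.trace_sub, ← Matrix.mul_assoc (ξ (G.t a)),
    ← Matrix.mul_assoc (ξ (G.s a)), Matrix.trace_mul_comm _ (x a), ← Matrix.mul_assoc (x a)]

theorem sum_trace_mul_momentMap_of_mem_endAlg {ξ : QMat R r} {x : QRep G R r} (hξ : ξ ∈ endAlg x)
    (y : QCoRep G R r) : ∑ i, (ξ i * momentMap G x y i).trace = 0 := by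
  rw [sum_trace_mul_momentMap]
  exact Finset.sum_eq_zero fun a _ => by rw [mem_endAlg.1 hξ a]; simp

/-- The moment map `y ↦ μ(x, y)` at a fixed representation `x`. -/
noncomputable def momentMapLin (x : QRep G R r) : QCoRep G R r →ₗ[R] QMat R r where
  toFun y := momentMap G x y
  map_add' y z := by
    simp only [momentMap_eq_sum_single, Pi.add_apply, Matrix.mul_add, Matrix.add_mul,
      Pi.single_add, Finset.sum_add_distrib]
    abel
  map_smul' c y := by
    simp only [momentMap_eq_sum_single, Pi.smul_apply, Matrix.mul_smul, Matrix.smul_mul,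
      Pi.single_smul, ← Finset.smul_sum, smul_sub, RingHom.id_apply]

theorem natCard_qCoRep_eq [Finite R] :
    (Nat.card (QCoRep G R r) : ℚ) =
      (Nat.card R : ℚ) ^ (-eulerForm G r r) * Nat.card (QMat R r) := by
  have hcard : Nat.card (QCoRep G R r) = Nat.card R ^ ∑ a, r (G.s a) * r (G.t a) := by
    simp [Matrix, Nat.card_pi, ← pow_mul, Finset.prod_pow_eq_pow_sum, mul_comm]
  have hR : (Nat.card R : ℚ) ≠ 0 := Nat.cast_ne_zero.2 Nat.card_pos.ne'
  rw [hcard, QMat.natCard_eq, Nat.cast_pow, Nat.cast_pow, ← zpow_natCast, ← zpow_natCast,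
    ← zpow_add₀ hR, eulerForm]
  congr 1
  push_cast
  ring

section Duality

variable {F : Type*} [Field F] [Algebra F R] {ε : R →ₗ[F] F}

theorem orthogonal_range_momentMapLin (hε : IsFrobeniusForm ε) (x : QRep G R r) :
    (QMat.traceForm ε r).orthogonal (LinearMap.range ((momentMapLin x).restrictScalars F)) =
      (Subalgebra.toSubmodule (endAlg x)).restrictScalars F := by
  ext ξ
  have hpair (y : QCoRep G R r) : QMat.traceForm ε r (momentMap G x y) ξ =
      ε (∑ a, ((ξ (G.t a) * x a - x a * ξ (G.s a)) * y a).trace) := by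
    rw [← sum_trace_mul_momentMap, ← QMat.traceForm_apply]
    exact QMat.traceForm_isSymm.eq _ _
  constructor
  · classical
    refine fun h a => sub_eq_zero.1 (hε.matrix_eq_zero fun B => ?_)
    rw [← h _ ⟨Pi.single a B, rfl⟩]
    refine Eq.trans ?_ (hpair (Pi.single a B)).symm
    rw [Finset.sum_eq_single a (fun b _ hb => by rw [Pi.single_eq_of_ne hb]; simp) (by simp),
      Pi.single_eq_same]
  · rintro h _ ⟨y, rfl⟩
    refine (hpair y).trans ?_
    rw [← sum_trace_mul_momentMap, sum_trace_mul_momentMap_of_mem_endAlg h, map_zero]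

theorem exists_momentMap_eq_iff [FiniteDimensional F R] (hε : IsFrobeniusForm ε) {x : QRep G R r}
    {θ : QMat R r} :
    (∃ y, momentMap G x y = θ) ↔ ∀ ξ ∈ endAlg x, ε (∑ i, (ξ i * θ i).trace) = 0 := by
  change θ ∈ LinearMap.range ((momentMapLin x).restrictScalars F) ↔ _
  rw [← LinearMap.BilinForm.orthogonal_orthogonal (QMat.traceForm_nondegenerate hε)
    QMat.traceForm_isSymm.isRefl (LinearMap.range _), orthogonal_range_momentMapLin hε]
  rfl

theorem finrank_ker_momentMapLin_add_finrank_qMat [FiniteDimensional F R] (hε : IsFrobeniusForm ε)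
    (x : QRep G R r) :
    Module.finrank F (LinearMap.ker ((momentMapLin x).restrictScalars F)) +
        Module.finrank F (QMat R r) =
      Module.finrank F (QCoRep G R r) + Module.finrank F (endAlg x) := by
  have hend : Module.finrank F (endAlg x) =
      Module.finrank F ((Subalgebra.toSubmodule (endAlg x)).restrictScalars F) := rfl
  have hle := Submodule.finrank_le (LinearMap.range ((momentMapLin x).restrictScalars F))
  rw [hend, ← orthogonal_range_momentMapLin hε,
    LinearMap.BilinForm.finrank_orthogonal (QMat.traceForm_nondegenerate hε),
    ← LinearMap.finrank_range_add_finrank_ker ((momentMapLin x).restrictScalars F)]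
  omega

theorem natCard_momentMap_fibre [Finite R] [Finite F] (hε : IsFrobeniusForm ε) {x : QRep G R r}
    {θ : QMat R r} (hθ : ∃ y, momentMap G x y = θ) :
    (Nat.card {y : QCoRep G R r // momentMap G x y = θ} : ℚ) =
      (Nat.card R : ℚ) ^ (-eulerForm G r r) * Nat.card (endAlg x) := by
  obtain ⟨y₀, rfl⟩ := hθ
  set f := (momentMapLin x).restrictScalars F
  have hker : Nat.card {y : QCoRep G R r // momentMap G x y = momentMap G x y₀} =
      Nat.card (LinearMap.ker f) :=
    Nat.card_congr ((Equiv.subRight y₀).subtypeEquiv fun y => by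
      rw [LinearMap.mem_ker, Equiv.subRight_apply, map_sub, sub_eq_zero]
      rfl)
  have hmul : Nat.card (LinearMap.ker f) * Nat.card (QMat R r) =
      Nat.card (QCoRep G R r) * Nat.card (endAlg x) := by
    rw [Module.natCard_eq_pow_finrank (K := F) (V := LinearMap.ker f),
      Module.natCard_eq_pow_finrank (K := F) (V := QMat R r),
      Module.natCard_eq_pow_finrank (K := F) (V := QCoRep G R r),
      Module.natCard_eq_pow_finrank (K := F) (V := endAlg x), ← pow_add, ← pow_add,
      finrank_ker_momentMapLin_add_finrank_qMat hε x]
  have hQ : (Nat.card (QMat R r) : ℚ) ≠ 0 := Nat.cast_ne_zero.2 Nat.card_pos.ne'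
  refine mul_right_cancel₀ hQ ?_
  calc _ = (Nat.card (QCoRep G R r) : ℚ) * Nat.card (endAlg x) := by rw [hker]; exact_mod_cast hmul
    _ = _ := by rw [natCard_qCoRep_eq]; ring

end Duality

end MomentMap

/-! ### Absolutely indecomposable representations -/

section AbsIndec

variable {G : FinQuiver} {F K : Type} [Field F] [Field K] {α : ℕ} {r : G.V → ℕ} (φ : F →+* K)

theorem endAlgMap_algebraMap (x : QRep G (TruncRing F α) r) (c : F) :
    endAlgMap (truncMap φ α) x (algebraMap F _ c) = algebraMap K _ (φ c) := by
  refine Subtype.ext (funext fun i => ?_)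
  rw [endAlgMap_apply]
  change (algebraMap F (Matrix (Fin (r i)) (Fin (r i)) (TruncRing F α)) c).map _ =
    algebraMap K (Matrix (Fin (r i)) (Fin (r i)) (TruncRing K α)) (φ c)
  rw [Matrix.algebraMap_eq_diagonal, Matrix.algebraMap_eq_diagonal,
    Matrix.diagonal_map (map_zero _)]
  exact congrArg _ (funext fun _ => TruncRing.truncMap_algebraMap φ c)

variable [NeZero α]

theorem exists_map_eq_of_endAlgMap_eq_algebraMap (hr : r ≠ 0) {x : QRep G (TruncRing F α) r}
    {ξ : endAlg x} {c : K} (h : endAlgMap (truncMap φ α) x ξ = algebraMap K _ c) :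
    ∃ d, φ d = c := by
  obtain ⟨i, hi⟩ := Function.ne_iff.1 hr
  let k : Fin (r i) := ⟨0, Nat.pos_of_ne_zero hi⟩
  refine ⟨TruncRing.eval₀ F (ξ.1 i k k), ?_⟩
  have hkk : truncMap φ α (ξ.1 i k k) = algebraMap K _ c := by
    refine (congrArg (fun η => η.1 i k k) h).trans ?_
    exact Matrix.algebraMap_matrix_apply.trans (if_pos rfl)
  rw [← TruncRing.eval₀_truncMap, hkk, AlgHom.commutes, Algebra.algebraMap_self_apply]

theorem exists_isNilpotent_sub_of_endAlgMap [Finite K] (hr : r ≠ 0)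
    {x : QRep G (TruncRing F α) r} {ξ : endAlg x} {c : K}
    (h : IsNilpotent (endAlgMap (truncMap φ α) x ξ - algebraMap K _ c)) :
    ∃ d : F, IsNilpotent (ξ - algebraMap F _ d) := by
  have := Fintype.ofFinite K
  have := QMat.nontrivial (R := TruncRing K α) hr
  -- A power of `ξ` becomes the scalar `c` over `K`, so its entries show that `c` lies in `F`.
  obtain ⟨m, hm⟩ := (isNilpotent_sub_algebraMap_iff_exists_pow_card
    (a := endAlgMap (truncMap φ α) x ξ)).1 h
  rw [← map_pow] at hm
  obtain ⟨d, rfl⟩ := exists_map_eq_of_endAlgMap_eq_algebraMap φ hr hm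
  refine ⟨d, (IsNilpotent.map_iff (endAlgMap_injective (TruncRing.truncMap_injective φ) x)).1 ?_⟩
  have hsub := map_sub (endAlgMap (truncMap φ α) x) ξ (algebraMap F _ d)
  rw [endAlgMap_algebraMap] at hsub
  rwa [hsub]

theorem AbsIndec.exists_isNilpotent_sub_endAlgMap [Algebra F K] [FiniteDimensional F K] [Finite K]
    (hr : r ≠ 0) {x : QRep G (TruncRing F α) r} (hx : AbsIndec G F α x) {ξ : endAlg x} {P : F[X]}
    (hP : P ≠ 0) (hsplit : (P.map (algebraMap F K)).Splits) (hroot : aeval ξ P = 0) :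
    ∃ c : K, IsNilpotent (endAlgMap (truncMap (algebraMap F K) α) x ξ - algebraMap K _ c) := by
  have := QMat.nontrivial (R := TruncRing K α) hr
  have hcomm : (algebraMap K _).comp (algebraMap F K) =
      (endAlgMap (truncMap (algebraMap F K) α) x).comp (algebraMap F (endAlg x)) :=
    RingHom.ext fun c => (endAlgMap_algebraMap (algebraMap F K) x c).symm
  refine exists_isNilpotent_sub_of_splits (a := endAlgMap (truncMap (algebraMap F K) α) x ξ)
    (fun c => isNilpotent_or_isUnit_of_not_decomposable (hx K) _)
    (Polynomial.map_ne_zero hP) hsplit ?_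
  rw [← map_aeval_eq_aeval_map hcomm, hroot, map_zero]

theorem AbsIndec.isSplitLocal_endAlg [Finite F] (hr : r ≠ 0) {x : QRep G (TruncRing F α) r}
    (hx : AbsIndec G F α x) : IsSplitLocal F (endAlg x) := by
  intro ξ
  have : Finite (minpoly F ξ).SplittingField := Module.finite_of_finite F
  obtain ⟨c, hc⟩ := hx.exists_isNilpotent_sub_endAlgMap hr
    (minpoly.ne_zero (IsIntegral.of_finite F ξ)) (SplittingField.splits _) (minpoly.aeval F ξ)
  exact exists_isNilpotent_sub_of_endAlgMap _ hr hc

theorem AbsIndec.natCard_stabilizer [Finite F] (hr : r ≠ 0) {x : QRep G (TruncRing F α) r}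
    (hx : AbsIndec G F α x) :
    (Nat.card (MulAction.stabilizer (QGL (TruncRing F α) r) x) : ℚ) =
      Nat.card (endAlg x) * (1 - (Nat.card F : ℚ)⁻¹) := by
  have := QMat.nontrivial (R := TruncRing F α) hr
  rw [_root_.natCard_stabilizer, (hx.isSplitLocal_endAlg hr).card_units]

end AbsIndec

/-! ### Scalar matrices in the socle -/

section Socle

variable {F : Type} [Field F] {α : ℕ}

/-- The tuple of scalar matrices `(t^(α-1) λᵢ · Id)ᵢ`, for `λᵢ` in the base field. -/
noncomputable def socleScalar (α : ℕ) {V : Type*} (r : V → ℕ) (lam : V → F) :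
    QMat (TruncRing F α) r :=
  fun i => (tvar F α ^ (α - 1) * algebraMap F _ (lam i)) • 1

theorem map_socleScalar {K : Type} [Field K] (φ : F →+* K) {V : Type*} (r : V → ℕ) (lam : V → F) :
    QMat.map (truncMap φ α) r (socleScalar α r lam) = socleScalar α r (φ ∘ lam) := by
  funext i
  rw [QMat.map_apply, socleScalar, socleScalar, Matrix.map_smul' _ _ _ (map_mul _),
    Matrix.map_one _ (map_zero _) (map_one _), map_mul, map_pow, TruncRing.truncMap_tvar,
    TruncRing.truncMap_algebraMap, Function.comp_apply]

theorem trace_mul_smul_one {R n : Type*} [CommRing R] [Fintype n] [DecidableEq n]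
    (A : Matrix n n R) (c : R) : (A * c • (1 : Matrix n n R)).trace = c * A.trace := by
  simp

theorem sum_trace_mul_socleScalar [NeZero α] {V : Type*} [Fintype V] {r : V → ℕ}
    (ξ : QMat (TruncRing F α) r) (lam : V → F) :
    ∑ i, (ξ i * socleScalar α r lam i).trace =
      (∑ i, lam i * TruncRing.eval₀ F (ξ i).trace) • tvar F α ^ (α - 1) := by
  have hmul (c : F) (a : TruncRing F α) : tvar F α ^ (α - 1) * algebraMap F _ c * a =
      (c * TruncRing.eval₀ F a) • tvar F α ^ (α - 1) := by
    rw [mul_assoc, TruncRing.tvar_pow_mul, map_mul, AlgHom.commutes]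
    rfl
  rw [Finset.sum_smul]
  exact Finset.sum_congr rfl fun i _ => (trace_mul_smul_one _ _).trans (hmul _ _)

variable {G : FinQuiver} {r : G.V → ℕ} {lam : G.V → F} [NeZero α]

theorem absIndec_of_momentMap_eq_socleScalar
    (hgen : ∀ r' : G.V → ℕ, r' ≠ 0 → (∀ i, r' i ≤ r i) → r' ≠ r → ∑ i, lam i * (r' i : F) ≠ 0)
    {x : QRep G (TruncRing F α) r} {y : QCoRep G (TruncRing F α) r}
    (hxy : momentMap G x y = socleScalar α r lam) : AbsIndec G F α x := by
  intro K _ _ _ hdec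
  obtain ⟨r', h0, hle, hne, e, he, htr⟩ := hdec.exists_mem_endAlg_trace
  refine hgen r' h0 hle hne ((algebraMap F K).injective ?_)
  have hpair := sum_trace_mul_momentMap_of_mem_endAlg he
    fun a => (y a).map (truncMap (algebraMap F K) α)
  rw [momentMap_map, hxy, map_socleScalar, sum_trace_mul_socleScalar] at hpair
  simpa [htr] using (smul_eq_zero.1 hpair).resolve_right TruncRing.tvar_pow_ne_zero

theorem AbsIndec.exists_momentMap_eq_socleScalar [Finite F] (hr : r ≠ 0)
    (hlam : ∑ i, lam i * (r i : F) = 0) {x : QRep G (TruncRing F α) r} (hx : AbsIndec G F α x) :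
    ∃ y, momentMap G x y = socleScalar α r lam := by
  obtain ⟨ε, hε⟩ := TruncRing.exists_isFrobeniusForm F α
  refine (exists_momentMap_eq_iff hε).2 fun ξ hξ => ?_
  obtain ⟨c, hc⟩ := hx.isSplitLocal_endAlg hr ⟨ξ, hξ⟩
  have htrace (i : G.V) : TruncRing.eval₀ F (ξ i).trace = c * r i := by
    have hnil := hc.map ((Pi.evalRingHom _ i).comp (endAlg x).val.toRingHom)
    simpa using map_trace_of_isNilpotent_sub (TruncRing.eval₀ F) (A := ξ i) (c := c) hnil
  have hzero : ∑ i, lam i * TruncRing.eval₀ F (ξ i).trace = 0 := by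
    simp only [htrace, mul_left_comm _ c]
    rw [← Finset.mul_sum, hlam, mul_zero]
  rw [sum_trace_mul_socleScalar, hzero, zero_smul, map_zero]

end Socle

/-! ### Counting orbits -/

theorem AbsIndec.glAct {G : FinQuiver} {F : Type} [Field F] {α : ℕ} {r : G.V → ℕ}
    {x : QRep G (TruncRing F α) r} (hx : AbsIndec G F α x) (g : QGL (TruncRing F α) r) :
    AbsIndec G F α (_root_.glAct G g x) := by
  intro K _ _ _ h
  rw [glAct_map] at h
  exact hx K h.of_glAct

/-- The absolutely indecomposable representations of rank `r`, as a set stable under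
`∏ᵢ GL_{rᵢ}(R)`. -/
def absIndecReps (G : FinQuiver) (F : Type) [Field F] (α : ℕ) (r : G.V → ℕ) :
    SubMulAction (QGL (TruncRing F α) r) (QRep G (TruncRing F α) r) where
  carrier := {x | AbsIndec G F α x}
  smul_mem' g _ hx := hx.glAct g

theorem natCard_orbits_absIndecReps (G : FinQuiver) (F : Type) [Field F] [Fintype F] (α : ℕ)
    (r : G.V → ℕ) :
    Nat.card (MulAction.orbitRel.Quotient (QGL (TruncRing F α) r) (absIndecReps G F α r)) =
      KacCountRank G F α r := by
  refine Nat.card_congr (Quot.congrRight fun x y => ?_)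
  rw [MulAction.orbitRel_apply, MulAction.mem_orbit_symm]
  exact exists_congr fun g => Subtype.ext_iff

theorem AbsIndec.natCard_momentMap_fibre {G : FinQuiver} {F : Type} [Field F] [Finite F] {α : ℕ}
    [NeZero α] {r : G.V → ℕ} (hr : r ≠ 0) {lam : G.V → F} (hlam : ∑ i, lam i * (r i : F) = 0)
    {x : QRep G (TruncRing F α) r} (hx : AbsIndec G F α x) :
    (Nat.card {y : QCoRep G (TruncRing F α) r // momentMap G x y = socleScalar α r lam} : ℚ) =
      (Nat.card F : ℚ) ^ (-(α : ℤ) * eulerForm G r r) / (1 - (Nat.card F : ℚ)⁻¹) *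
        Nat.card (MulAction.stabilizer (QGL (TruncRing F α) r) x) := by
  obtain ⟨ε, hε⟩ := TruncRing.exists_isFrobeniusForm F α
  have hq : 1 - (Nat.card F : ℚ)⁻¹ ≠ 0 :=
    (sub_pos.2 (inv_lt_one_of_one_lt₀ (by exact_mod_cast Finite.one_lt_card))).ne'
  have hR : (Nat.card (TruncRing F α) : ℚ) = (Nat.card F : ℚ) ^ α := by
    rw [Module.natCard_eq_pow_finrank (K := F), TruncRing.finrank_eq, Nat.cast_pow]
  rw [_root_.natCard_momentMap_fibre hε (hx.exists_momentMap_eq_socleScalar hr hlam), hR,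
    hx.natCard_stabilizer hr, ← zpow_natCast, ← zpow_mul, neg_mul_comm, div_mul_eq_mul_div,
    ← mul_assoc, mul_div_cancel_right₀ _ hq]

theorem natCard_pairs_eq_sum (G : FinQuiver) {F : Type} [Field F] [Finite F] {α : ℕ} [NeZero α]
    {r : G.V → ℕ} [Fintype (absIndecReps G F α r)] {lam : G.V → F}
    (hgen : ∀ r' : G.V → ℕ, r' ≠ 0 → (∀ i, r' i ≤ r i) → r' ≠ r → ∑ i, lam i * (r' i : F) ≠ 0) :
    Nat.card {xy : QRep G (TruncRing F α) r × QCoRep G (TruncRing F α) r //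
        ∀ i, momentMap G xy.1 xy.2 i = socleScalar α r lam i} =
      ∑ x : absIndecReps G F α r,
        Nat.card {y : QCoRep G (TruncRing F α) r // momentMap G x.1 y = socleScalar α r lam} := by
  rw [← Nat.card_sigma]
  exact Nat.card_congr
    { toFun p := ⟨⟨p.1.1, absIndec_of_momentMap_eq_socleScalar hgen (funext p.2)⟩,
        ⟨p.1.2, funext p.2⟩⟩
      invFun s := ⟨(s.1.1, s.2.1), fun i => congrFun s.2.2 i⟩ }

theorem deformed_fibre_count_general (G : FinQuiver) (α : ℕ) (hα : 1 ≤ α) (r : G.V → ℕ)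
    (hr : r ≠ 0) (F : Type) [Field F] [Fintype F]
    (lam : G.V → F) (hlam : ∑ i : G.V, lam i * (r i : F) = 0)
    (hgen : ∀ r' : G.V → ℕ, r' ≠ 0 → (∀ i, r' i ≤ r i) → r' ≠ r →
      ∑ i : G.V, lam i * (r' i : F) ≠ 0) :
    (Nat.card {xy : QRep G (TruncRing F α) r × QCoRep G (TruncRing F α) r //
        ∀ i : G.V, momentMap G xy.1 xy.2 i
          = (tvar F α ^ (α - 1) * algebraMap F (TruncRing F α) (lam i)) •
              (1 : Matrix (Fin (r i)) (Fin (r i)) (TruncRing F α))} : ℚ)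
      = (Nat.card (∀ i : G.V, (Matrix (Fin (r i)) (Fin (r i)) (TruncRing F α))ˣ) : ℚ)
        * (Fintype.card F : ℚ) ^ (-(α : ℤ) * eulerForm G r r)
        * (KacCountRank G F α r : ℚ) / (1 - (Fintype.card F : ℚ)⁻¹) := by
  have : NeZero α := ⟨Nat.one_le_iff_ne_zero.1 hα⟩
  have := Fintype.ofFinite (absIndecReps G F α r)
  calc _ = ∑ x : absIndecReps G F α r,
          (Fintype.card F : ℚ) ^ (-(α : ℤ) * eulerForm G r r) / (1 - (Fintype.card F : ℚ)⁻¹) *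
            Nat.card (MulAction.stabilizer (QGL (TruncRing F α) r) x) := by
        refine (congrArg _ (natCard_pairs_eq_sum G hgen)).trans ?_
        rw [Nat.cast_sum]
        refine Finset.sum_congr rfl fun x _ => ?_
        rw [x.2.natCard_momentMap_fibre hr hlam, Nat.card_eq_fintype_card,
          SubMulAction.stabilizer_of_subMul]
    _ = _ := by
        rw [← Finset.mul_sum, ← Nat.cast_sum, sum_card_stabilizer_eq_card_orbits_mul_card_group,
          natCard_orbits_absIndecReps, Nat.cast_mul]
        ring

/-! ### Reduction of the deformation parameter modulo `p` -/

theorem sum_intCast_mul_natCast_ne_zero {ι A : Type*} [Fintype ι] [Ring A] {r r' : ι → ℕ}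
    {lam : ι → ℤ} (hchar : ∑ i, (lam i).natAbs * r i < ringChar A) (hle : ∀ i, r' i ≤ r i)
    (h : ∑ i, lam i * (r' i : ℤ) ≠ 0) : ∑ i, (lam i : A) * (r' i : A) ≠ 0 := by
  intro hzero
  have hcast : ((∑ i, lam i * (r' i : ℤ) : ℤ) : A) = 0 := by exact_mod_cast hzero
  have hlt : (∑ i, lam i * (r' i : ℤ)).natAbs < ringChar A :=
    calc (∑ i, lam i * (r' i : ℤ)).natAbs ≤ ∑ i, (lam i * (r' i : ℤ)).natAbs :=
          Int.natAbs_sum_le _ _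
      _ = ∑ i, (lam i).natAbs * r' i := by simp [Int.natAbs_mul]
      _ ≤ ∑ i, (lam i).natAbs * r i :=
          Finset.sum_le_sum fun i _ => Nat.mul_le_mul_left _ (hle i)
      _ < ringChar A := hchar
  refine h (Int.natAbs_eq_zero.1 (Nat.eq_zero_of_dvd_of_lt ?_ hlt))
  exact Int.natCast_dvd.1 ((CharP.intCast_eq_zero_iff A _ _).1 hcast)

/-- Let `Q` be a finite quiver, `α ≥ 1`, `r ∈ ℕ^{Q₀}` an indivisible rank
vector and `λ ∈ ℤ^{Q₀}` generic with respect to `r`.  Let `𝔽_q` be a finite field of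
characteristic `p > Σ_i |λ_i| r_i` and `R := 𝔽_q[t]/(t^α)`.  Then
`#{(x,y) : μ(x,y) = (t^{α−1} λ_i · Id)_i} = #GL_{α,r} · q^{−α⟨r,r⟩} · A_{(Q,α),r}(q)/(1 − q⁻¹)`. -/
theorem deformed_fibre_count (G : FinQuiver) (α : ℕ) (hα : 1 ≤ α) (r : G.V → ℕ)
    (hind : Finset.univ.gcd r = 1)
    (lam : G.V → ℤ) (hlam : ∑ i : G.V, lam i * (r i : ℤ) = 0)
    (hgen : ∀ r' : G.V → ℕ, r' ≠ 0 → (∀ i, r' i ≤ r i) → r' ≠ r →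
      ∑ i : G.V, lam i * (r' i : ℤ) ≠ 0)
    (F : Type) [Field F] [Fintype F]
    (hchar : ∑ i : G.V, (lam i).natAbs * r i < ringChar F) :
    (Nat.card {xy : QRep G (TruncRing F α) r × QCoRep G (TruncRing F α) r //
        ∀ i : G.V, momentMap G xy.1 xy.2 i
          = (tvar F α ^ (α - 1) * ((lam i : ℤ) : TruncRing F α)) •
              (1 : Matrix (Fin (r i)) (Fin (r i)) (TruncRing F α))} : ℚ)
      = (Nat.card (∀ i : G.V, (Matrix (Fin (r i)) (Fin (r i)) (TruncRing F α))ˣ) : ℚ)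
        * (Fintype.card F : ℚ) ^ (-(α : ℤ) * eulerForm G r r)
        * (KacCountRank G F α r : ℚ) / (1 - (Fintype.card F : ℚ)⁻¹) := by
  have hr : r ≠ 0 := by
    rintro rfl
    exact zero_ne_one ((Finset.gcd_eq_zero_iff.2 fun _ _ => rfl).symm.trans hind)
  have hlamF : ∑ i, ((lam i : ℤ) : F) * (r i : F) = 0 := by
    exact_mod_cast congrArg (Int.cast (R := F)) hlam
  simpa only [map_intCast] using deformed_fibre_count_general G α hα r hr F (fun i => lam i) hlamF
    fun r' h0 hle hne => sum_intCast_mul_natCast_ne_zero hchar hle (hgen r' h0 hle hne)
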